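/- Fix an integer M ≥ 1, a real τ > 0, and constants c₁ > 0 and c₂ > 0. Define ξ(θ) = (θ·Γ̄(M, (θ/τ)²) − τ·Γ̄(M + 1/2, (θ/τ)²)) / Γ(M), f(θ) = c₁·ξ(θ) + c₂·θ, ϖ(θ) = (θ²·Γ̄(M, (θ/τ)²) − 2θτ·Γ̄(M + 1/2, (θ/τ)²) + τ²·Γ̄(M + 1, (θ/τ)²)) / Γ(M), and MSE(θ) = c₂·(M·τ² + θ²) + c₁·ϖ(θ) for θ ≥ 0. If θ* > 0 satisfies f(θ*) = 0, then θ* is the unique global minimizer of MSE on [0, ∞): for every θ ≥ 0 with θ ≠ θ*, MSE(θ*) < MSE(θ). -/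

import Mathlib

/-!
Let `γ` be the gamma distribution of shape `s = M` and rate `1`. The incomplete gamma functions are
truncated moments of `γ`, so that

`ξ(θ) = -∫ (τ√t - θ)⁺ dγ(t)` and `ϖ(θ) = ∫ ((τ√t - θ)⁺)² dγ(t)`.

As a function of `θ`, `((a - θ)⁺)²` is convex with derivative `-2 (a - θ)⁺`. Integrating its tangent
inequality against `γ` shows that `2 ξ(θ)` is a subgradient of `ϖ` at `θ`, hence `2 f(θ)` one of the
mean squared error. The latter is strongly convex because of the term `c₂ θ²`, so it is uniquely
minimized where `f` vanishes. No derivative of an incomplete gamma function is needed.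
-/

/-- The upper incomplete gamma function `Γ̄(s, x) = ∫_x^∞ t^{s-1} e^{-t} dt`. -/
noncomputable def uGamma (s x : ℝ) : ℝ := ∫ t in Set.Ioi x, t ^ (s - 1) * Real.exp (-t)

open MeasureTheory ProbabilityTheory Set

section PosPart

lemma sq_posPart_sub_add_le {R : Type*} [CommRing R] [LinearOrder R] [IsStrictOrderedRing R]
    (a x y : R) : (a - y)⁺ ^ 2 + 2 * (y - x) * (a - y)⁺ ≤ (a - x)⁺ ^ 2 := by
  rcases le_total a y with hay | hya
  · rw [posPart_eq_zero.2 (sub_nonpos.2 hay)]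
    simp
  · rw [posPart_eq_self.2 (sub_nonneg.2 hya)]
    rcases le_total a x with hax | hxa
    · rw [posPart_eq_zero.2 (sub_nonpos.2 hax)]
      linarith [mul_nonneg (sub_nonneg.2 hya) (sub_nonneg.2 hax),
        mul_nonneg (sub_nonneg.2 hya) (sub_nonneg.2 (hya.trans hax))]
    · rw [posPart_eq_self.2 (sub_nonneg.2 hxa)]
      linarith [sq_nonneg (x - y)]

variable {Ω : Type*} [MeasurableSpace Ω] {μ : Measure Ω} [IsFiniteMeasure μ] {X : Ω → ℝ}

lemma memLp_posPart_sub_const {p : ENNReal} (hX : MemLp X p μ) (x : ℝ) :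
    MemLp (fun ω ↦ (X ω - x)⁺) p μ :=
  (hX.sub (memLp_const x)).pos_part

lemma integral_sq_posPart_sub_add_le (hX : MemLp X 2 μ) (x y : ℝ) :
    ∫ ω, (X ω - y)⁺ ^ 2 ∂μ + 2 * (y - x) * ∫ ω, (X ω - y)⁺ ∂μ ≤ ∫ ω, (X ω - x)⁺ ^ 2 ∂μ := by
  have hy := memLp_posPart_sub_const hX y
  have hlin : Integrable (fun ω ↦ 2 * (y - x) * (X ω - y)⁺) μ :=
    (hy.integrable one_le_two).const_mul _
  rw [← integral_const_mul, ← integral_add hy.integrable_sq hlin]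
  exact integral_mono (hy.integrable_sq.add hlin)
    (memLp_posPart_sub_const hX x).integrable_sq
    (fun ω ↦ sq_posPart_sub_add_le (X ω) x y)

lemma mul_sq_add_integral_sq_posPart_sub_lt (hX : MemLp X 2 μ) {c₁ c₂ x y : ℝ} (hc₁ : 0 ≤ c₁)
    (hc₂ : 0 < c₂) (hy : c₂ * y = c₁ * ∫ ω, (X ω - y)⁺ ∂μ) (hxy : x ≠ y) :
    c₂ * y ^ 2 + c₁ * ∫ ω, (X ω - y)⁺ ^ 2 ∂μ < c₂ * x ^ 2 + c₁ * ∫ ω, (X ω - x)⁺ ^ 2 ∂μ := by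
  have hsubgrad := mul_le_mul_of_nonneg_left (integral_sq_posPart_sub_add_le hX x y) hc₁
  have hgap : 0 < c₂ * (x - y) ^ 2 := mul_pos hc₂ (sq_pos_of_ne_zero (sub_ne_zero.2 hxy))
  linear_combination hsubgrad + hgap + 2 * (y - x) * hy

end PosPart

section GammaMeasure

lemma measurable_gammaPDF (a r : ℝ) : Measurable (gammaPDF a r) :=
  (measurable_gammaPDFReal a r).ennreal_ofReal

lemma ae_gammaPDF_lt_top (a r : ℝ) (μ : Measure ℝ) : ∀ᵐ t ∂μ, gammaPDF a r t < ⊤ :=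
  ae_of_all _ fun _ ↦ ENNReal.ofReal_lt_top

lemma toReal_gammaPDF_of_nonneg {a r t : ℝ} (ha : 0 < a) (hr : 0 < r) (ht : 0 ≤ t) :
    (gammaPDF a r t).toReal = r ^ a / Real.Gamma a * t ^ (a - 1) * Real.exp (-(r * t)) := by
  rw [gammaPDF, ENNReal.toReal_ofReal (gammaPDFReal_nonneg ha hr t), gammaPDFReal, if_pos ht]

lemma integrable_rpow_gammaMeasure {a r p : ℝ} (ha : 0 < a) (hr : 0 < r) (hp : 0 < a + p) :
    Integrable (fun t ↦ t ^ p) (gammaMeasure a r) := by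
  rw [gammaMeasure, integrable_withDensity_iff (measurable_gammaPDF a r) (ae_gammaPDF_lt_top a r _),
    ← integrableOn_iff_integrable_of_support_subset (s := Ici 0),
    integrableOn_Ici_iff_integrableOn_Ioi]
  · have hkernel : IntegrableOn (fun t ↦ r ^ a / Real.Gamma a *
        (t ^ (a + p - 1) * Real.exp (-r * t ^ (1 : ℝ)))) (Ioi 0) :=
      (integrableOn_rpow_mul_exp_neg_mul_rpow (by linarith) one_pos hr).const_mul _
    refine hkernel.congr_fun (fun t (ht : 0 < t) ↦ ?_) measurableSet_Ioi
    dsimp only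
    rw [toReal_gammaPDF_of_nonneg ha hr ht.le, add_sub_right_comm, Real.rpow_add ht,
      Real.rpow_one, neg_mul]
    ring
  · refine Function.support_subset_iff'.2 fun t ht ↦ ?_
    rw [gammaPDF_of_neg (not_le.1 ht), ENNReal.toReal_zero, mul_zero]

lemma memLp_sqrt_gammaMeasure {a r : ℝ} (ha : 0 < a) (hr : 0 < r) :
    MemLp Real.sqrt 2 (gammaMeasure a r) := by
  rw [memLp_two_iff_integrable_sq Real.continuous_sqrt.measurable.aestronglyMeasurable]
  simpa only [Real.sq_sqrt', Real.rpow_one] using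
    (integrable_rpow_gammaMeasure (p := 1) ha hr (by positivity)).pos_part

variable {s x : ℝ}

lemma setIntegral_Ioi_rpow_gammaMeasure (hs : 0 < s) (hx : 0 ≤ x) (p : ℝ) :
    ∫ t in Ioi x, t ^ p ∂gammaMeasure s 1 = uGamma (s + p) x / Real.Gamma s := by
  have hdensity : ∀ t ∈ Ioi x, (gammaPDF s 1 t).toReal • t ^ p =
      t ^ (s + p - 1) * Real.exp (-t) / Real.Gamma s := fun t ht ↦ by
    have ht₀ : 0 < t := hx.trans_lt ht
    rw [toReal_gammaPDF_of_nonneg hs one_pos ht₀.le, add_sub_right_comm, Real.rpow_add ht₀,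
      Real.one_rpow, one_mul, smul_eq_mul]
    ring
  rw [gammaMeasure, setIntegral_withDensity_eq_setIntegral_toReal_smul (measurable_gammaPDF s 1)
    (ae_gammaPDF_lt_top s 1 _) _ measurableSet_Ioi,
    setIntegral_congr_fun measurableSet_Ioi hdensity, integral_div, uGamma]

lemma setIntegral_Ioi_quadratic_sqrt_gammaMeasure (hs : 0 < s) (hx : 0 ≤ x) (a b c : ℝ) :
    ∫ t in Ioi x, (a * √t ^ 2 + b * √t + c) ∂gammaMeasure s 1 =
      (a * uGamma (s + 1) x + b * uGamma (s + 1 / 2) x + c * uGamma s x) / Real.Gamma s := by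
  have hint {p : ℝ} (hp : 0 ≤ p) (d : ℝ) :
      Integrable (fun t ↦ d * t ^ p) ((gammaMeasure s 1).restrict (Ioi x)) :=
    ((integrable_rpow_gammaMeasure hs one_pos (by positivity)).const_mul d).integrableOn
  have hrpow : EqOn (fun t ↦ a * √t ^ 2 + b * √t + c)
      (fun t ↦ a * t ^ (1 : ℝ) + b * t ^ (1 / 2 : ℝ) + c * t ^ (0 : ℝ)) (Ioi x) := fun t ht ↦ by
    simp only [← Real.sqrt_eq_rpow, Real.sq_sqrt (hx.trans_lt ht).le, Real.rpow_one,
      Real.rpow_zero, mul_one]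
  rw [setIntegral_congr_fun measurableSet_Ioi hrpow,
    integral_add ((hint zero_le_one a).fun_add (hint one_half_pos.le b)) (hint le_rfl c),
    integral_add (hint zero_le_one a) (hint one_half_pos.le b)]
  simp only [integral_const_mul, setIntegral_Ioi_rpow_gammaMeasure hs hx, add_zero]
  ring

end GammaMeasure

section SoftThreshold

variable {s τ θ : ℝ}

lemma integral_posPart_mul_sqrt_sub_pow (μ : Measure ℝ) (hτ : 0 < τ) (hθ : 0 ≤ θ) {n : ℕ}
    (hn : n ≠ 0) :
    ∫ t, (τ * √t - θ)⁺ ^ n ∂μ = ∫ t in Ioi ((θ / τ) ^ 2), (τ * √t - θ) ^ n ∂μ := by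
  have hmem (t : ℝ) : t ∈ Ioi ((θ / τ) ^ 2) ↔ 0 < τ * √t - θ := by
    rw [mem_Ioi, ← Real.lt_sqrt (div_nonneg hθ hτ.le), div_lt_iff₀' hτ, sub_pos]
  have hzero (t : ℝ) (ht : t ∉ Ioi ((θ / τ) ^ 2)) : (τ * √t - θ)⁺ ^ n = 0 := by
    rw [posPart_eq_zero.2 (not_lt.1 (mt (hmem t).2 ht)), zero_pow hn]
  rw [← setIntegral_eq_integral_of_forall_compl_eq_zero hzero]
  exact setIntegral_congr_fun measurableSet_Ioi fun t ht ↦ by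
    simp only [posPart_eq_self.2 ((hmem t).1 ht).le]

lemma integral_posPart_mul_sqrt_sub_gammaMeasure (hs : 0 < s) (hτ : 0 < τ) (hθ : 0 ≤ θ) :
    ∫ t, (τ * √t - θ)⁺ ∂gammaMeasure s 1 =
      (τ * uGamma (s + 1 / 2) ((θ / τ) ^ 2) - θ * uGamma s ((θ / τ) ^ 2)) / Real.Gamma s := by
  calc
    _ = ∫ t in Ioi ((θ / τ) ^ 2), (τ * √t - θ) ∂gammaMeasure s 1 := by
      simpa only [pow_one] using
        integral_posPart_mul_sqrt_sub_pow (gammaMeasure s 1) hτ hθ one_ne_zero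
    _ = ∫ t in Ioi ((θ / τ) ^ 2), (0 * √t ^ 2 + τ * √t + -θ) ∂gammaMeasure s 1 := by
      congr with t
      ring
    _ = _ := by
      rw [setIntegral_Ioi_quadratic_sqrt_gammaMeasure hs (sq_nonneg _)]
      ring

lemma integral_sq_posPart_mul_sqrt_sub_gammaMeasure (hs : 0 < s) (hτ : 0 < τ) (hθ : 0 ≤ θ) :
    ∫ t, (τ * √t - θ)⁺ ^ 2 ∂gammaMeasure s 1 =
      (θ ^ 2 * uGamma s ((θ / τ) ^ 2) - 2 * θ * τ * uGamma (s + 1 / 2) ((θ / τ) ^ 2)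
        + τ ^ 2 * uGamma (s + 1) ((θ / τ) ^ 2)) / Real.Gamma s := by
  calc
    _ = ∫ t in Ioi ((θ / τ) ^ 2), (τ * √t - θ) ^ 2 ∂gammaMeasure s 1 :=
      integral_posPart_mul_sqrt_sub_pow _ hτ hθ two_ne_zero
    _ = ∫ t in Ioi ((θ / τ) ^ 2), (τ ^ 2 * √t ^ 2 + -(2 * θ * τ) * √t + θ ^ 2)
          ∂gammaMeasure s 1 := by
      congr with t
      ring
    _ = _ := by
      rw [setIntegral_Ioi_quadratic_sqrt_gammaMeasure hs (sq_nonneg _)]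
      ring

end SoftThreshold

theorem root_is_unique_min_of_mse_general
    (s : ℝ) (hs : 0 < s) (τ : ℝ) (hτ : 0 < τ) (c₁ c₂ : ℝ) (hc₁ : 0 ≤ c₁) (hc₂ : 0 < c₂)
    (ξ f ϖ MSE : ℝ → ℝ)
    (hξ : ∀ θ, ξ θ = (θ * uGamma s ((θ / τ) ^ 2) - τ * uGamma (s + 1 / 2) ((θ / τ) ^ 2))
      / Real.Gamma s)
    (hf : ∀ θ, f θ = c₁ * ξ θ + c₂ * θ)
    (hϖ : ∀ θ, ϖ θ = (θ ^ 2 * uGamma s ((θ / τ) ^ 2)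
      - 2 * θ * τ * uGamma (s + 1 / 2) ((θ / τ) ^ 2)
      + τ ^ 2 * uGamma (s + 1) ((θ / τ) ^ 2)) / Real.Gamma s)
    (hMSE : ∀ θ, MSE θ = c₂ * (s * τ ^ 2 + θ ^ 2) + c₁ * ϖ θ)
    (θstar : ℝ) (hθstar : 0 ≤ θstar) (hroot : f θstar = 0) :
    ∀ θ : ℝ, 0 ≤ θ → θ ≠ θstar → MSE θstar < MSE θ := by
  intro θ hθ hne
  have := isProbabilityMeasure_gammaMeasure hs one_pos
  have hξ_integral : ∫ t, (τ * √t - θstar)⁺ ∂gammaMeasure s 1 = -ξ θstar := by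
    rw [integral_posPart_mul_sqrt_sub_gammaMeasure hs hτ hθstar, hξ, ← neg_div, neg_sub]
  have hϖ_integral {u : ℝ} (hu : 0 ≤ u) : ∫ t, (τ * √t - u)⁺ ^ 2 ∂gammaMeasure s 1 = ϖ u := by
    rw [integral_sq_posPart_mul_sqrt_sub_gammaMeasure hs hτ hu, hϖ]
  have hstationary : c₂ * θstar = c₁ * ∫ t, (τ * √t - θstar)⁺ ∂gammaMeasure s 1 := by
    rw [hξ_integral]
    linarith [hf θstar]
  have hlt := mul_sq_add_integral_sq_posPart_sub_lt
    ((memLp_sqrt_gammaMeasure hs one_pos).const_mul τ) hc₁ hc₂ hstationary hne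
  rw [hϖ_integral hθstar, hϖ_integral hθ] at hlt
  rw [hMSE, hMSE]
  linarith

/-- Optimality part of Theorem 2 of the paper: any positive root `θ*` of
`f(θ) = c₁·ξ(θ) + c₂·θ` is the unique global minimizer on `[0,∞)` of the worst-case MSE
`MSE(θ) = c₂·(M·τ² + θ²) + c₁·ϖ(θ)`. -/
theorem root_is_unique_min_of_mse
    (M : ℕ) (hM : 1 ≤ M) (τ : ℝ) (hτ : 0 < τ) (c₁ c₂ : ℝ) (hc₁ : 0 < c₁) (hc₂ : 0 < c₂)
    (ξ f ϖ MSE : ℝ → ℝ)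
    (hξ : ∀ θ, ξ θ = (θ * uGamma M ((θ / τ) ^ 2) - τ * uGamma (M + 1 / 2) ((θ / τ) ^ 2))
      / Real.Gamma M)
    (hf : ∀ θ, f θ = c₁ * ξ θ + c₂ * θ)
    (hϖ : ∀ θ, ϖ θ = (θ ^ 2 * uGamma M ((θ / τ) ^ 2)
      - 2 * θ * τ * uGamma (M + 1 / 2) ((θ / τ) ^ 2)
      + τ ^ 2 * uGamma (M + 1) ((θ / τ) ^ 2)) / Real.Gamma M)
    (hMSE : ∀ θ, MSE θ = c₂ * (M * τ ^ 2 + θ ^ 2) + c₁ * ϖ θ)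
    (θstar : ℝ) (hθstar : 0 < θstar) (hroot : f θstar = 0) :
    ∀ θ : ℝ, 0 ≤ θ → θ ≠ θstar → MSE θstar < MSE θ :=
  root_is_unique_min_of_mse_general M (Nat.cast_pos.2 hM) τ hτ c₁ c₂ hc₁.le hc₂ ξ f ϖ MSE
    hξ hf hϖ hMSE θstar hθstar.le hroot
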